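/- For every integer k ≥ 1, the functions A_k satisfy the recurrence A_k(q) = (1/((2k+1)·2k)) · ( (6·A_1(q) + k(k−1))·A_{k−1}(q) − 2q·(d/dq)A_{k−1}(q) ) for all complex q with |q| < 1, where A_0(q) = 1 and the derivative is the complex derivative with respect to q. -/

import Mathlib

/-- MacMahon's generalized sum-of-divisors function `A_k(q)`, defined as the sum over all
strictly increasing `k`-tuples of positive integers.  For `k = 0` it equals `1`. -/
noncomputable def macA (k : ℕ) (q : ℂ) : ℂ :=
  ∑' m : {m : Fin k → ℕ // StrictMono m ∧ ∀ i, 0 < m i},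
    q ^ (∑ i, m.1 i) / ∏ i, (1 - q ^ m.1 i) ^ 2

/-!
Put `y = 2 - z - z⁻¹`. Since `(1 - z qⁿ) (1 - z⁻¹ qⁿ) = (1 - qⁿ)² + qⁿ y`, the product of these
factors over `n ≥ 1` equals `P² ∑ₖ A_k(q) yᵏ` with `P = ∏ (1 - qⁿ)`. The Jacobi triple product
expands it as `P⁻¹ ∑ⱼ (-1)ʲ q^(j(j+1)/2) (z⁻ʲ + ⋯ + zʲ)`, and the coefficient of `yᵏ` in
`z⁻ʲ + ⋯ + zʲ` is `(-1)ᵏ b_k(j)` with `b_k(j) = C(j+k+1, 2k+1) + C(j+k, 2k+1)`. Hence `P³ A_k` is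
the partial theta series `Θ_k = ∑ⱼ (-1)^(j+k) b_k(j) q^(j(j+1)/2)`.

Multiplying coefficients by `j (j + 1)` is the operator `2 q d/dq` on such series, so the identity
`(2k+2)(2k+3) b_{k+1}(j) = (j(j+1) - k(k+1)) b_k(j)` becomes
`(2k+2)(2k+3) Θ_{k+1} = k(k+1) Θ_k - 2 q Θ_k'`. Dividing by `Θ₀ = P³`, whose logarithmic derivative
is given by the case `k = 0`, yields the recurrence for the `A_k`.
-/

open Filter Finset Polynomial Topology

section GaussianBinomial

variable {R : Type*} [CommRing R] (q : R)

/-- The Gaussian binomial coefficient `[n, k]_q`, defined by the `q`-Pascal rule so that it makes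
sense in every commutative ring; it vanishes for `n < k`. -/
def qChoose : ℕ → ℕ → R
  | _, 0 => 1
  | 0, _ + 1 => 0
  | n + 1, k + 1 => qChoose n k + q ^ (k + 1) * qChoose n (k + 1)

/-- The finite `q`-Pochhammer symbol `(q; q)_n = (1 - q) ⋯ (1 - q ^ n)`. -/
def qPochhammer (n : ℕ) : R := ∏ i ∈ range n, (1 - q ^ (i + 1))

lemma qPochhammer_succ (n : ℕ) : qPochhammer q (n + 1) = qPochhammer q n * (1 - q ^ (n + 1)) :=
  prod_range_succ _ _

lemma qChoose_zero_right (n : ℕ) : qChoose q n 0 = 1 := by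
  rw [qChoose]

lemma qChoose_succ_succ (n k : ℕ) :
    qChoose q (n + 1) (k + 1) = qChoose q n k + q ^ (k + 1) * qChoose q n (k + 1) := by
  rw [qChoose]

variable {q} in
lemma qChoose_eq_zero_of_lt {n k : ℕ} (h : n < k) : qChoose q n k = 0 := by
  induction n generalizing k with
  | zero => obtain ⟨k, rfl⟩ := Nat.exists_eq_add_one.mpr h; rw [qChoose]
  | succ n ih =>
    obtain ⟨k, rfl⟩ := Nat.exists_eq_add_one.mpr (n.succ_pos.trans h)
    rw [qChoose_succ_succ, ih (by omega), ih (by omega), mul_zero, add_zero]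

lemma one_sub_pow_mul_qChoose_succ (m k : ℕ) :
    (1 - q ^ (k + 1)) * qChoose q (m + k) (k + 1) = (1 - q ^ m) * qChoose q (m + k) k := by
  induction k generalizing m with
  | zero =>
    induction m with
    | zero => simp [qChoose_eq_zero_of_lt]
    | succ m ih =>
      simp only [add_zero, zero_add, qChoose_zero_right, qChoose_succ_succ] at ih ⊢
      linear_combination q * ih
  | succ k ihk =>
    induction m with
    | zero => simp [qChoose_eq_zero_of_lt]
    | succ m ihm =>
      have hk := ihk (m + 1)
      rw [show m + 1 + k = m + (k + 1) by ring] at hk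
      rw [show m + 1 + (k + 1) = m + (k + 1) + 1 by ring, qChoose_succ_succ, qChoose_succ_succ]
      linear_combination q ^ (k + 2) * ihm + hk

lemma qChoose_succ_succ' (m k : ℕ) :
    qChoose q (m + k + 1) (k + 1) = q ^ m * qChoose q (m + k) k + qChoose q (m + k) (k + 1) := by
  rw [qChoose_succ_succ]
  linear_combination -one_sub_pow_mul_qChoose_succ q m k

lemma qChoose_symm_add : ∀ m n : ℕ, qChoose q (m + n) m = qChoose q (m + n) n
  | 0, n => by
    induction n with
    | zero => rfl
    | succ n ih =>
      rw [zero_add, qChoose_zero_right] at ih ⊢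
      rw [qChoose_succ_succ, qChoose_eq_zero_of_lt n.lt_succ_self, ← ih, mul_zero, add_zero]
  | m + 1, 0 => by simpa using (qChoose_symm_add 0 (m + 1)).symm
  | m + 1, n + 1 => by
    have h₁ := qChoose_symm_add m (n + 1)
    have h₂ := qChoose_symm_add (m + 1) n
    have pascal := qChoose_succ_succ' q (m + 1) n
    rw [show m + 1 + n = m + (n + 1) by ring] at h₂ pascal
    rw [show m + 1 + (n + 1) = m + (n + 1) + 1 by ring, pascal, qChoose_succ_succ, h₁, h₂, add_comm]

lemma qChoose_mul_qPochhammer_mul_qPochhammer (m k : ℕ) :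
    qChoose q (m + k) k * (qPochhammer q m * qPochhammer q k) = qPochhammer q (m + k) := by
  induction k generalizing m with
  | zero => simp [qChoose_zero_right, qPochhammer]
  | succ k ih =>
    have absorb := one_sub_pow_mul_qChoose_succ q (m + 1) k
    have ih := ih (m + 1)
    rw [show m + 1 + k = m + (k + 1) by ring] at absorb ih
    rw [qPochhammer_succ] at ih ⊢
    linear_combination ih + qPochhammer q m * qPochhammer q k * absorb

lemma map_qChoose {S : Type*} [CommRing S] (f : R →+* S) :
    ∀ n k, f (qChoose q n k) = qChoose (f q) n k
  | n, 0 => by rw [qChoose_zero_right, qChoose_zero_right, map_one]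
  | 0, k + 1 => by rw [qChoose, qChoose, map_zero]
  | n + 1, k + 1 => by
    rw [qChoose, qChoose, map_add, map_mul, map_pow, map_qChoose f n k, map_qChoose f n (k + 1)]

end GaussianBinomial

section FiniteTripleProduct

variable {R : Type*} [CommRing R]

/-- The Dirichlet kernel `z⁻ʲ + ⋯ + zʲ`, written as a polynomial in `y = 2 - z - z⁻¹`. -/
def dirichletKernel (y : R) : ℕ → R
  | 0 => 1
  | 1 => 3 - y
  | j + 2 => (2 - y) * dirichletKernel y (j + 1) - dirichletKernel y j

/-- The coefficient of `dirichletKernel y j` in the finite Jacobi triple product; the exponent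
`(j + 1).choose 2` is the triangular number `j (j + 1) / 2`. -/
def jacobiCoeff (q : R) (N j : ℕ) : R :=
  (-1) ^ j * q ^ (j + 1).choose 2 * qChoose q (2 * N + 1) (N + 1 + j)

lemma jacobiCoeff_eq_zero_of_lt (q : R) {N j : ℕ} (h : N < j) : jacobiCoeff q N j = 0 := by
  rw [jacobiCoeff, qChoose_eq_zero_of_lt (by omega), mul_zero]

-- This is `jacobiCoeff_succ_succ` at `j = -1`, reading `jacobiCoeff q N (-1)` as
-- `-jacobiCoeff q N 0`.
lemma jacobiCoeff_succ_zero (q : R) (N : ℕ) :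
    jacobiCoeff q (N + 1) 0 =
      (1 + (q ^ (N + 1)) ^ 2) * jacobiCoeff q N 0 -
        q ^ (N + 1) * (jacobiCoeff q N 1 - jacobiCoeff q N 0) := by
  have pascal₃ := qChoose_succ_succ' q (N + 1) (N + 1)
  have pascal₂ := qChoose_succ_succ q (2 * N + 1) N
  have pascal₁ := qChoose_succ_succ q (2 * N + 1) (N + 1)
  have symm := qChoose_symm_add q N (N + 1)
  rw [show N + 1 + (N + 1) = 2 * N + 1 + 1 by ring] at pascal₃
  rw [show N + (N + 1) = 2 * N + 1 by ring] at symm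
  simp only [jacobiCoeff, show 2 * (N + 1) + 1 = 2 * N + 1 + 1 + 1 by ring, add_zero, zero_add,
    pow_zero, pow_one, one_mul, Nat.choose_self, Nat.choose_eq_zero_of_lt Nat.one_lt_two,
    Nat.reduceAdd]
  rw [pascal₃, pascal₂, pascal₁, symm]
  ring

lemma jacobiCoeff_succ_succ (q : R) (N j : ℕ) :
    jacobiCoeff q (N + 1) (j + 1) =
      (1 + (q ^ (N + 1)) ^ 2) * jacobiCoeff q N (j + 1) -
        q ^ (N + 1) * (jacobiCoeff q N j + jacobiCoeff q N (j + 2)) := by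
  rcases lt_or_ge N j with hN | hj
  · simp [jacobiCoeff_eq_zero_of_lt, show N < j + 1 by omega, show N < j + 2 by omega, hN]
  obtain ⟨m, rfl⟩ := Nat.exists_eq_add_of_le hj
  have triangle_succ (i : ℕ) : (i + 1 + 1).choose 2 = i + 1 + (i + 1).choose 2 := by
    rw [Nat.choose_succ_succ', Nat.choose_one_right]
  have pascal₃ := qChoose_succ_succ' q m (2 * j + m + 2)
  have pascal₂ := qChoose_succ_succ q (2 * (j + m) + 1) (2 * j + m + 1)
  have pascal₁ := qChoose_succ_succ q (2 * (j + m) + 1) (2 * j + m + 2)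
  rw [show m + (2 * j + m + 2) = 2 * (j + m) + 1 + 1 by ring] at pascal₃
  simp only [jacobiCoeff, show 2 * (j + m + 1) + 1 = 2 * (j + m) + 1 + 1 + 1 by ring,
    show j + m + 1 + 1 + (j + 1) = 2 * j + m + 2 + 1 by ring,
    show j + m + 1 + j = 2 * j + m + 1 by ring, show j + m + 1 + (j + 1) = 2 * j + m + 2 by ring,
    show j + m + 1 + (j + 2) = 2 * j + m + 3 by ring]
  rw [pascal₃, pascal₂, pascal₁, triangle_succ (j + 1), triangle_succ]
  ring

lemma two_sub_mul_sum_dirichletKernel (y : R) (a : ℕ → R) (N : ℕ) :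
    (2 - y) * ∑ j ∈ range (N + 1), a j * dirichletKernel y j =
      (a 1 - a 0) * dirichletKernel y 0 +
        ∑ j ∈ range (N + 1), (a j + a (j + 2)) * dirichletKernel y (j + 1) -
        (a (N + 1) * dirichletKernel y N + a (N + 2) * dirichletKernel y (N + 1)) := by
  induction N with
  | zero =>
    simp only [zero_add, range_one, sum_singleton, dirichletKernel, mul_one]
    ring
  | succ N ih =>
    have kernel_rec : dirichletKernel y (N + 2) =
        (2 - y) * dirichletKernel y (N + 1) - dirichletKernel y N := by
      rw [dirichletKernel]
    rw [sum_range_succ, mul_add, ih, sum_range_succ _ (N + 1)]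
    linear_combination -a (N + 1) * kernel_rec

lemma sum_jacobiCoeff_mul_eq_sum_succ (q : R) (N : ℕ) (f : ℕ → R) :
    ∑ j ∈ range (N + 1), jacobiCoeff q N j * f j =
      ∑ j ∈ range (N + 1), jacobiCoeff q N (j + 1) * f (j + 1) + jacobiCoeff q N 0 * f 0 := by
  rw [← sum_range_succ' (fun j ↦ jacobiCoeff q N j * f j), sum_range_succ _ (N + 1),
    jacobiCoeff_eq_zero_of_lt q N.lt_succ_self, zero_mul, add_zero]

lemma sum_jacobiCoeff_succ_mul_dirichletKernel (q y : R) (N : ℕ) :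
    ∑ j ∈ range (N + 2), jacobiCoeff q (N + 1) j * dirichletKernel y j =
      ((1 - q ^ (N + 1)) ^ 2 + q ^ (N + 1) * y) *
        ∑ j ∈ range (N + 1), jacobiCoeff q N j * dirichletKernel y j := by
  have shift := sum_jacobiCoeff_mul_eq_sum_succ q N (dirichletKernel y)
  have two_sub_mul := two_sub_mul_sum_dirichletKernel y (jacobiCoeff q N) N
  rw [jacobiCoeff_eq_zero_of_lt q (show N < N + 1 by omega),
    jacobiCoeff_eq_zero_of_lt q (show N < N + 2 by omega)] at two_sub_mul
  have tail : ∑ j ∈ range (N + 1), jacobiCoeff q (N + 1) (j + 1) * dirichletKernel y (j + 1) =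
      (1 + (q ^ (N + 1)) ^ 2) *
          ∑ j ∈ range (N + 1), jacobiCoeff q N (j + 1) * dirichletKernel y (j + 1) -
        q ^ (N + 1) * ∑ j ∈ range (N + 1),
          (jacobiCoeff q N j + jacobiCoeff q N (j + 2)) * dirichletKernel y (j + 1) := by
    simp only [jacobiCoeff_succ_succ, sub_mul, mul_assoc, sum_sub_distrib, mul_sum]
  rw [sum_range_succ', tail, jacobiCoeff_succ_zero]
  linear_combination q ^ (N + 1) * two_sub_mul - (1 + (q ^ (N + 1)) ^ 2) * shift

theorem finite_jacobi_triple_product (q y : R) (N : ℕ) :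
    ∏ n ∈ range N, ((1 - q ^ (n + 1)) ^ 2 + q ^ (n + 1) * y) =
      ∑ j ∈ range (N + 1), jacobiCoeff q N j * dirichletKernel y j := by
  induction N with
  | zero => simp [jacobiCoeff, dirichletKernel, qChoose]
  | succ N ih =>
    rw [sum_jacobiCoeff_succ_mul_dirichletKernel, ← ih, prod_range_succ, mul_comm]

lemma map_jacobiCoeff {S : Type*} [CommRing S] (f : R →+* S) (q : R) (N j : ℕ) :
    f (jacobiCoeff q N j) = jacobiCoeff (f q) N j := by
  simp only [jacobiCoeff, map_mul, map_pow, map_neg, map_one, map_qChoose]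

end FiniteTripleProduct

section Coefficients

/-- The absolute value of the coefficient of `y ^ k` in `dirichletKernel y j`. -/
def dirichletCoeff (k j : ℕ) : ℕ :=
  (j + k + 1).choose (2 * k + 1) + (j + k).choose (2 * k + 1)

lemma dirichletCoeff_succ_add_two_add (k j : ℕ) :
    dirichletCoeff (k + 1) (j + 2) + dirichletCoeff (k + 1) j =
      2 * dirichletCoeff (k + 1) (j + 1) + dirichletCoeff k (j + 1) := by
  have choose_second_diff (n m : ℕ) :
      (n + 1 + 1).choose (m + 1 + 1) + n.choose (m + 1 + 1) =
        2 * (n + 1).choose (m + 1 + 1) + n.choose m := by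
    have pascal₁ := Nat.choose_succ_succ' (n + 1) (m + 1)
    have pascal₂ := Nat.choose_succ_succ' n (m + 1)
    have pascal₃ := Nat.choose_succ_succ' n m
    omega
  have second_diff₁ := choose_second_diff (j + k + 2) (2 * k + 1)
  have second_diff₂ := choose_second_diff (j + k + 1) (2 * k + 1)
  unfold dirichletCoeff
  ring_nf at second_diff₁ second_diff₂ ⊢
  omega

lemma dirichletCoeff_eq_zero_of_lt {k j : ℕ} (h : j < k) : dirichletCoeff k j = 0 := by
  rw [dirichletCoeff, Nat.choose_eq_zero_of_lt (by omega), Nat.choose_eq_zero_of_lt (by omega)]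

lemma coeff_dirichletKernel_X {R : Type*} [CommRing R] (k : ℕ) : ∀ j,
    (dirichletKernel (X : R[X]) j).coeff k = (-1) ^ k * dirichletCoeff k j
  | 0 => by
    cases k with
    | zero => simp [dirichletKernel, dirichletCoeff]
    | succ k => simp [dirichletKernel, dirichletCoeff_eq_zero_of_lt, coeff_one]
  | 1 => by
    match k with
    | 0 => simp [dirichletKernel, dirichletCoeff]
    | 1 => simp [dirichletKernel, dirichletCoeff, coeff_ofNat_succ]
    | k + 2 =>
      simp [dirichletKernel, dirichletCoeff_eq_zero_of_lt, coeff_X, coeff_ofNat_succ]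
  | j + 2 => by
    have ih₀ := coeff_dirichletKernel_X (R := R) k j
    have ih₁ := coeff_dirichletKernel_X (R := R) k (j + 1)
    rw [dirichletKernel, sub_mul, coeff_sub, coeff_sub, ← C_ofNat, coeff_C_mul, ih₀, ih₁]
    cases k with
    | zero =>
      simp only [pow_zero, dirichletCoeff, add_zero, mul_zero, zero_add, Nat.choose_one_right,
        Nat.cast_add, Nat.cast_one, one_mul, mul_coeff_zero, coeff_X_zero, zero_mul, sub_zero,
        Nat.cast_ofNat]
      ring
    | succ k =>
      rw [coeff_X_mul, coeff_dirichletKernel_X k (j + 1)]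
      have second_diff := congrArg (Nat.cast (R := R)) (dirichletCoeff_succ_add_two_add k j)
      push_cast at second_diff
      linear_combination -(-1) ^ (k + 1) * second_diff

lemma two_mul_add_one_mul_dirichletCoeff (k j : ℕ) :
    (2 * k + 1) * dirichletCoeff k j = (2 * j + 1) * (j + k).choose (2 * k) := by
  rcases lt_or_ge j k with hjk | hkj
  · rw [dirichletCoeff_eq_zero_of_lt hjk, Nat.choose_eq_zero_of_lt (by omega), mul_zero, mul_zero]
  · obtain ⟨i, rfl⟩ := Nat.exists_eq_add_of_le hkj
    have absorb := Nat.add_one_mul_choose_eq (k + i + k) (2 * k)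
    have choose_ratio := Nat.choose_succ_right_eq (k + i + k) (2 * k)
    rw [show k + i + k - 2 * k = i by omega] at choose_ratio
    rw [dirichletCoeff]
    linarith

lemma dirichletCoeff_succ (k j : ℕ) :
    (2 * k + 2) * (2 * k + 3) * dirichletCoeff (k + 1) j + k * (k + 1) * dirichletCoeff k j =
      j * (j + 1) * dirichletCoeff k j := by
  rcases lt_or_ge j k with hjk | hkj
  · simp [dirichletCoeff_eq_zero_of_lt, hjk, hjk.trans]
  obtain ⟨i, rfl⟩ := Nat.exists_eq_add_of_le hkj
  -- `coeff_k` and `coeff_k_succ` reduce both coefficients to binomials, which `absorb` and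
  -- `choose_ratio` express as multiples of `(j + k).choose (2 * k)`.
  have coeff_k := two_mul_add_one_mul_dirichletCoeff k (k + i)
  have coeff_k_succ := two_mul_add_one_mul_dirichletCoeff (k + 1) (k + i)
  have absorb := Nat.add_one_mul_choose_eq (k + i + k) (2 * k + 1)
  have choose_ratio := Nat.choose_succ_right_eq (k + i + k) (2 * k)
  rw [show k + i + k - 2 * k = i by omega] at choose_ratio
  apply Nat.eq_of_mul_eq_mul_left (show 0 < 2 * k + 1 by omega)
  zify at *
  linear_combination (2 * k + 2) * (2 * k + 1) * coeff_k_succ -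
    (2 * k + 1) * (2 * (k + i) + 1) * absorb +
    (2 * (k + i) + 1) * (2 * k + i + 1) * choose_ratio - i * (2 * k + i + 1) * coeff_k

end Coefficients

section ElementarySymmetric

lemma coeff_prod_one_add_C_mul_X {R ι : Type*} [CommSemiring R] (x : ι → R) (s : Finset ι)
    (k : ℕ) : (∏ i ∈ s, (1 + C (x i) * X)).coeff k = ∑ t ∈ powersetCard k s, ∏ i ∈ t, x i := by
  classical
  simp only [prod_one_add, prod_mul_distrib, prod_const, ← map_prod, finsetSum_coeff,
    coeff_C_mul_X_pow, powersetCard_eq_filter, sum_filter, eq_comm]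

lemma tendsto_sum_powersetCard_range {R : Type*} [NormedCommRing R] [NormOneClass R]
    [CompleteSpace R] {x : ℕ → R} (hx : Summable (‖x ·‖)) (k : ℕ) :
    Tendsto (fun N ↦ ∑ s ∈ powersetCard k (range N), ∏ n ∈ s, x n) atTop
      (𝓝 (∑' s : Set.powersetCard ℕ k, ∏ n ∈ s.1, x n)) := by
  have powerset_exhausts : Tendsto (fun N ↦ (range N).powerset) atTop atTop :=
    tendsto_atTop_finset_of_monotone (fun _ _ h ↦ powerset_mono.mpr (range_mono h)) fun s ↦
      (exists_nat_subset_range s).imp fun _ ↦ mem_powerset.mpr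
  classical
  have hasSum := hasSum_subtype_iff_indicator.mp
    ((summable_finsetProd_of_summable_norm hx).subtype (· ∈ Set.powersetCard ℕ k)).hasSum
  refine (hasSum.comp powerset_exhausts).congr fun N ↦ ?_
  simp only [Function.comp_apply, powersetCard_eq_filter, sum_filter, Set.indicator_apply,
    Set.powersetCard.mem_iff]

/-- The term `q ^ n / (1 - q ^ n) ^ 2` of MacMahon's sums, with `n` shifted to start at `0`. -/
def lambertTerm {F : Type*} [Field F] (q : F) (n : ℕ) : F := q ^ (n + 1) / (1 - q ^ (n + 1)) ^ 2

lemma qPochhammer_sq_mul_sum_prod_lambertTerm {F : Type*} [Field F] {q : F}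
    (hq : ∀ n, 1 - q ^ (n + 1) ≠ 0) (k N : ℕ) :
    qPochhammer q N ^ 2 * ∑ s ∈ powersetCard k (range N), ∏ n ∈ s, lambertTerm q n =
      ∑ j ∈ range (N + 1), jacobiCoeff q N j * ((-1) ^ k * dirichletCoeff k j) := by
  have factor (n : ℕ) : (1 - C q ^ (n + 1)) ^ 2 + C q ^ (n + 1) * X =
      C ((1 - q ^ (n + 1)) ^ 2) * (1 + C (lambertTerm q n) * X) := by
    rw [mul_add, ← mul_assoc, ← C_mul, lambertTerm, mul_div_cancel₀ _ (pow_ne_zero 2 (hq n))]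
    simp
  have coeff_triple_product :=
    congrArg (coeff · k) (finite_jacobi_triple_product (C q) (X : F[X]) N)
  simpa only [factor, prod_mul_distrib, ← map_prod, prod_pow, qPochhammer, coeff_C_mul,
    coeff_prod_one_add_C_mul_X, ← map_jacobiCoeff, finsetSum_coeff, coeff_dirichletKernel_X]
    using coeff_triple_product

/-- Strictly increasing tuples of natural numbers become tuples of positive ones by adding `1`. -/
def orderEmbeddingEquivPos (k : ℕ) :
    (Fin k ↪o ℕ) ≃ {m : Fin k → ℕ // StrictMono m ∧ ∀ i, 0 < m i} where
  toFun e := ⟨fun i ↦ e i + 1, e.strictMono.add_const 1, fun i ↦ (e i).succ_pos⟩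
  invFun m := OrderEmbedding.ofStrictMono (fun i ↦ m.1 i - 1) fun i j hij ↦
    Nat.sub_lt_sub_right (m.2.2 i) (m.2.1 hij)
  left_inv e := by ext; simp
  right_inv m := by ext i; exact Nat.sub_add_cancel (m.2.2 i)

lemma macA_eq_tsum_powersetCard (k : ℕ) (q : ℂ) :
    macA k q = ∑' s : Set.powersetCard ℕ k, ∏ n ∈ s.1, lambertTerm q n := by
  rw [macA, ← (orderEmbeddingEquivPos k).tsum_eq, ← Set.powersetCard.ofFinEmbEquiv.tsum_eq]
  refine tsum_congr fun e ↦ ?_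
  simp [orderEmbeddingEquivPos, lambertTerm, prod_div_distrib, prod_pow_eq_pow_sum,
    Set.powersetCard.ofFinEmbEquiv]

lemma macA_zero (q : ℂ) : macA 0 q = 1 := by
  rw [macA, tsum_eq_single ⟨![], Subsingleton.strictMono _, (Fin.elim0 ·)⟩
    fun m hm ↦ (hm (Subsingleton.elim m _)).elim]
  simp

lemma one_sub_norm_le_norm_one_sub_pow {q : ℂ} (hq : ‖q‖ < 1) (n : ℕ) :
    1 - ‖q‖ ≤ ‖1 - q ^ (n + 1)‖ :=
  calc 1 - ‖q‖ ≤ ‖(1 : ℂ)‖ - ‖q ^ (n + 1)‖ := by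
        rw [norm_one, norm_pow]
        gcongr
        exact pow_le_of_le_one (norm_nonneg q) hq.le n.succ_ne_zero
    _ ≤ ‖1 - q ^ (n + 1)‖ := norm_sub_norm_le _ _

lemma one_sub_pow_ne_zero {q : ℂ} (hq : ‖q‖ < 1) (n : ℕ) : 1 - q ^ (n + 1) ≠ 0 :=
  norm_pos_iff.mp ((sub_pos.mpr hq).trans_le (one_sub_norm_le_norm_one_sub_pow hq n))

lemma summable_norm_lambertTerm {q : ℂ} (hq : ‖q‖ < 1) : Summable (‖lambertTerm q ·‖) := by
  have geometric : Summable fun n ↦ ‖q‖ ^ (n + 1) / (1 - ‖q‖) ^ 2 :=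
    ((summable_nat_add_iff 1).mpr
      (summable_geometric_of_lt_one (norm_nonneg q) hq)).div_const _
  refine geometric.of_nonneg_of_le (fun _ ↦ norm_nonneg _) fun n ↦ ?_
  have := sub_pos.mpr hq
  rw [lambertTerm, norm_div, norm_pow, norm_pow]
  gcongr
  exact one_sub_norm_le_norm_one_sub_pow hq n

end ElementarySymmetric

section QLimits

/-- Euler's infinite product `(q; q)_∞ = ∏ (1 - q ^ n)` over `n ≥ 1`. -/
noncomputable def qPochhammerInf (q : ℂ) : ℂ := ∏' n : ℕ, (1 - q ^ (n + 1))

variable {q : ℂ}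

lemma tendsto_qPochhammer (hq : ‖q‖ < 1) :
    Tendsto (qPochhammer q) atTop (𝓝 (qPochhammerInf q)) :=
  (ModularForm.multipliable_one_sub_pow hq).tendsto_prod_tprod_nat

lemma qPochhammerInf_ne_zero (hq : ‖q‖ < 1) : qPochhammerInf q ≠ 0 := by
  simp only [qPochhammerInf, sub_eq_add_neg]
  refine tprod_one_add_ne_zero_of_summable (fun n ↦ ?_) ?_
  · simpa only [sub_eq_add_neg] using one_sub_pow_ne_zero hq n
  · simpa only [norm_neg, norm_pow] using
      (summable_nat_add_iff 1).mpr (summable_geometric_of_lt_one (norm_nonneg q) hq)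

lemma qChoose_eq_div (hq : ‖q‖ < 1) (m k : ℕ) :
    qChoose q (m + k) k = qPochhammer q (m + k) * (qPochhammer q m)⁻¹ * (qPochhammer q k)⁻¹ := by
  have ne_zero (n : ℕ) : qPochhammer q n ≠ 0 :=
    prod_ne_zero_iff.mpr fun i _ ↦ one_sub_pow_ne_zero hq i
  rw [← qChoose_mul_qPochhammer_mul_qPochhammer, mul_assoc, mul_assoc, ← mul_inv,
    mul_inv_cancel₀ (mul_ne_zero (ne_zero m) (ne_zero k)), mul_one]

lemma tendsto_qChoose (hq : ‖q‖ < 1) :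
    Tendsto (fun p : ℕ × ℕ ↦ qChoose q (p.1 + p.2) p.2) (atTop ×ˢ atTop)
      (𝓝 (qPochhammerInf q)⁻¹) := by
  have lim := tendsto_qPochhammer hq
  have lim_inv := lim.inv₀ (qPochhammerInf_ne_zero hq)
  have lim_add := lim.comp (tendsto_fst.atTop_add_atTop tendsto_snd)
  simpa only [qChoose_eq_div hq, Function.comp_def,
    mul_inv_cancel₀ (qPochhammerInf_ne_zero hq), one_mul] using
    (lim_add.mul (lim_inv.comp tendsto_fst)).mul (lim_inv.comp tendsto_snd)

lemma exists_norm_qChoose_le (hq : ‖q‖ < 1) : ∃ B, ∀ n k, ‖qChoose q n k‖ ≤ B := by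
  have lim := tendsto_qPochhammer hq
  have lim_inv := lim.inv₀ (qPochhammerInf_ne_zero hq)
  obtain ⟨B, hB⟩ := (Metric.isBounded_range_of_tendsto _ lim).exists_norm_le
  obtain ⟨D, hD⟩ := (Metric.isBounded_range_of_tendsto _ lim_inv).exists_norm_le
  have hB₀ : 0 ≤ B := (norm_nonneg _).trans (hB _ ⟨0, rfl⟩)
  have hD₀ : 0 ≤ D := (norm_nonneg _).trans (hD _ ⟨0, rfl⟩)
  refine ⟨B * D * D, fun n k ↦ ?_⟩
  rcases lt_or_ge n k with hnk | hkn
  · rw [qChoose_eq_zero_of_lt hnk, norm_zero]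
    positivity
  · obtain ⟨m, rfl⟩ := Nat.exists_eq_add_of_le' hkn
    rw [qChoose_eq_div hq, norm_mul, norm_mul]
    gcongr
    exacts [hB _ ⟨_, rfl⟩, hD _ ⟨_, rfl⟩, hD _ ⟨_, rfl⟩]

lemma tendsto_jacobiCoeff (hq : ‖q‖ < 1) (j : ℕ) :
    Tendsto (jacobiCoeff q · j) atTop
      (𝓝 ((-1) ^ j * q ^ (j + 1).choose 2 * (qPochhammerInf q)⁻¹)) := by
  have lim_pair : Tendsto (fun N ↦ (N - j, N + (1 + j))) atTop (atTop ×ˢ atTop) :=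
    (tendsto_sub_atTop_nat j).prodMk (tendsto_add_atTop_nat (1 + j))
  refine (((tendsto_qChoose hq).comp lim_pair).const_mul _).congr' ?_
  filter_upwards [eventually_ge_atTop j] with N hjN
  simp only [jacobiCoeff, Function.comp_apply, add_assoc,
    show N - j + (N + (1 + j)) = 2 * N + 1 by omega]

end QLimits

section ThetaSeries

lemma differentiableAt_and_hasSum_mul_deriv_tsum {ι : Type*} {c : ι → ℂ} {e : ι → ℕ}
    (hc : ∀ r : ℝ, 0 ≤ r → r < 1 → Summable fun i ↦ ‖c i‖ * r ^ e i) {q : ℂ} (hq : ‖q‖ < 1) :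
    DifferentiableAt ℂ (fun w ↦ ∑' i, c i * w ^ e i) q ∧
      HasSum (fun i ↦ e i * (c i * q ^ e i)) (q * deriv (fun w ↦ ∑' i, c i * w ^ e i) q) := by
  obtain ⟨r, hqr, hr⟩ := exists_between hq
  have summable_bound := hc r ((norm_nonneg q).trans hqr.le) hr
  have differentiableOn (i : ι) :
      DifferentiableOn ℂ (fun w ↦ c i * w ^ e i) (Metric.ball 0 r) := by fun_prop
  have norm_le (i : ι) (w : ℂ) (hw : w ∈ Metric.ball 0 r) :
      ‖c i * w ^ e i‖ ≤ ‖c i‖ * r ^ e i := by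
    rw [norm_mul, norm_pow]
    gcongr
    exact (mem_ball_zero_iff.mp hw).le
  have hq_mem : q ∈ Metric.ball 0 r := mem_ball_zero_iff.mpr hqr
  refine ⟨(Complex.differentiableOn_tsum_of_summable_norm summable_bound differentiableOn
    Metric.isOpen_ball norm_le).differentiableAt (Metric.isOpen_ball.mem_nhds hq_mem), ?_⟩
  have deriv_term (i : ι) :
      q * deriv (fun w ↦ c i * w ^ e i) q = e i * (c i * q ^ e i) := by
    rw [deriv_const_mul_field, deriv_pow_field]
    rcases e i with _ | n
    · rw [pow_zero, Nat.cast_zero, zero_mul, zero_mul, mul_zero, mul_zero]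
    · rw [Nat.add_sub_cancel, pow_succ]
      ring
  simpa only [deriv_term] using (Complex.hasSum_deriv_of_summable_norm summable_bound
    differentiableOn Metric.isOpen_ball norm_le hq_mem).mul_left q

/-- The coefficient of `q ^ (j (j + 1) / 2)` in `thetaSeries k`. -/
def thetaCoeff (k j : ℕ) : ℂ := (-1) ^ j * ((-1) ^ k * dirichletCoeff k j)

/-- The partial theta series `∑ⱼ (-1) ^ (j + k) bₖ(j) q ^ (j (j + 1) / 2)`, where `bₖ` is
`dirichletCoeff k`; for `k = 0` it is Jacobi's series for `(q; q)_∞ ^ 3`. -/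
noncomputable def thetaSeries (k : ℕ) (q : ℂ) : ℂ := ∑' j, thetaCoeff k j * q ^ (j + 1).choose 2

lemma thetaCoeff_succ (k j : ℕ) :
    (2 * k + 2) * (2 * k + 3) * thetaCoeff (k + 1) j =
      (k * (k + 1) - 2 * (j + 1).choose 2) * thetaCoeff k j := by
  have triangle : ((j : ℂ) + 1) * j = (j + 1).choose 2 * 2 := by
    exact_mod_cast j.choose_one_right ▸ Nat.add_one_mul_choose_eq j 1
  have coeff_succ : (2 * k + 2) * (2 * k + 3) * (dirichletCoeff (k + 1) j : ℂ) +
      k * (k + 1) * dirichletCoeff k j = j * (j + 1) * dirichletCoeff k j := by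
    exact_mod_cast dirichletCoeff_succ k j
  rw [thetaCoeff, thetaCoeff]
  linear_combination (-1) ^ j * (-1) ^ k * (-coeff_succ - dirichletCoeff k j * triangle)

lemma dirichletCoeff_le (k j : ℕ) :
    dirichletCoeff k j ≤ 2 * (j + (2 * k + 1)).choose (2 * k + 1) := by
  rw [dirichletCoeff, two_mul ((j + (2 * k + 1)).choose _)]
  exact add_le_add (Nat.choose_le_choose _ (by omega)) (Nat.choose_le_choose _ (by omega))

lemma summable_norm_thetaCoeff_mul_pow (k : ℕ) (r : ℝ) (hr₀ : 0 ≤ r) (hr : r < 1) :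
    Summable fun j ↦ ‖thetaCoeff k j‖ * r ^ (j + 1).choose 2 := by
  have summable_choose := (summable_choose_mul_geometric_of_norm_lt_one (2 * k + 1)
    ((Real.norm_of_nonneg hr₀).trans_lt hr)).mul_left 2
  refine summable_choose.of_nonneg_of_le (fun _ ↦ by positivity) fun j ↦ ?_
  have le_triangle : j ≤ (j + 1).choose 2 := by
    rw [Nat.choose_succ_succ', Nat.choose_one_right]
    exact Nat.le_add_right _ _
  have norm_coeff : ‖thetaCoeff k j‖ = dirichletCoeff k j := by simp [thetaCoeff]
  rw [norm_coeff, ← mul_assoc]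
  gcongr ?_ * ?_
  · exact_mod_cast dirichletCoeff_le k j
  · exact pow_le_pow_of_le_one hr₀ hr.le le_triangle

variable {q : ℂ}

lemma hasSum_thetaSeries (k : ℕ) (hq : ‖q‖ < 1) :
    HasSum (fun j ↦ thetaCoeff k j * q ^ (j + 1).choose 2) (thetaSeries k q) := by
  refine (Summable.of_norm ?_).hasSum
  simpa only [norm_mul, norm_pow] using
    summable_norm_thetaCoeff_mul_pow k ‖q‖ (norm_nonneg q) hq

lemma differentiableAt_thetaSeries (k : ℕ) (hq : ‖q‖ < 1) :
    DifferentiableAt ℂ (thetaSeries k) q :=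
  (differentiableAt_and_hasSum_mul_deriv_tsum (summable_norm_thetaCoeff_mul_pow k) hq).1

lemma thetaSeries_succ (k : ℕ) (hq : ‖q‖ < 1) :
    (2 * k + 2) * (2 * k + 3) * thetaSeries (k + 1) q =
      k * (k + 1) * thetaSeries k q - 2 * (q * deriv (thetaSeries k) q) := by
  have euler := (differentiableAt_and_hasSum_mul_deriv_tsum
    (summable_norm_thetaCoeff_mul_pow k) hq).2
  have termwise (j : ℕ) :
      (2 * k + 2) * (2 * k + 3) * (thetaCoeff (k + 1) j * q ^ (j + 1).choose 2) =
        k * (k + 1) * (thetaCoeff k j * q ^ (j + 1).choose 2) -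
          2 * ((j + 1).choose 2 * (thetaCoeff k j * q ^ (j + 1).choose 2)) := by
    linear_combination q ^ (j + 1).choose 2 * thetaCoeff_succ k j
  refine ((hasSum_thetaSeries (k + 1) hq).mul_left _).unique ?_
  simp only [termwise]
  exact ((hasSum_thetaSeries k hq).mul_left (k * (k + 1) : ℂ)).sub (euler.mul_left 2)

lemma tendsto_sum_jacobiCoeff_mul_dirichletCoeff (k : ℕ) (hq : ‖q‖ < 1) :
    Tendsto (fun N ↦ ∑ j ∈ range (N + 1), jacobiCoeff q N j * ((-1) ^ k * dirichletCoeff k j))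
      atTop (𝓝 ((qPochhammerInf q)⁻¹ * thetaSeries k q)) := by
  obtain ⟨B, hB⟩ := exists_norm_qChoose_le hq
  have sum_eq_tsum (N : ℕ) :
      ∑' j, jacobiCoeff q N j * ((-1) ^ k * dirichletCoeff k j) =
        ∑ j ∈ range (N + 1), jacobiCoeff q N j * ((-1) ^ k * dirichletCoeff k j) :=
    tsum_eq_sum fun j hj ↦ by
      rw [jacobiCoeff_eq_zero_of_lt q (by simpa using hj), zero_mul]
  rw [thetaSeries, ← tsum_mul_left]
  refine (tendsto_tsum_of_dominated_convergence
    ((summable_norm_thetaCoeff_mul_pow k ‖q‖ (norm_nonneg q) hq).mul_left B)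
    (fun j ↦ ?_) (.of_forall fun N j ↦ ?_)).congr sum_eq_tsum
  · convert (tendsto_jacobiCoeff hq j).mul_const ((-1) ^ k * (dirichletCoeff k j : ℂ)) using 2
    rw [thetaCoeff]
    ring
  · have regroup : jacobiCoeff q N j * ((-1) ^ k * dirichletCoeff k j) =
        qChoose q (2 * N + 1) (N + 1 + j) * (thetaCoeff k j * q ^ (j + 1).choose 2) := by
      rw [jacobiCoeff, thetaCoeff]
      ring
    rw [regroup, norm_mul, norm_mul (thetaCoeff k j), norm_pow]
    gcongr
    exact hB _ _

theorem thetaSeries_eq_qPochhammerInf_pow_mul_macA (k : ℕ) (hq : ‖q‖ < 1) :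
    thetaSeries k q = qPochhammerInf q ^ 3 * macA k q := by
  have lim_left := ((tendsto_qPochhammer hq).pow 2).mul
    (tendsto_sum_powersetCard_range (summable_norm_lambertTerm hq) k)
  simp only [qPochhammer_sq_mul_sum_prod_lambertTerm (one_sub_pow_ne_zero hq),
    ← macA_eq_tsum_powersetCard] at lim_left
  have lim_unique := tendsto_nhds_unique lim_left (tendsto_sum_jacobiCoeff_mul_dirichletCoeff k hq)
  rw [pow_succ', mul_assoc, lim_unique, mul_inv_cancel_left₀ (qPochhammerInf_ne_zero hq)]

lemma thetaSeries_zero (hq : ‖q‖ < 1) : thetaSeries 0 q = qPochhammerInf q ^ 3 := by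
  rw [thetaSeries_eq_qPochhammerInf_pow_mul_macA 0 hq, macA_zero, mul_one]

lemma thetaSeries_zero_ne_zero (hq : ‖q‖ < 1) : thetaSeries 0 q ≠ 0 := by
  rw [thetaSeries_zero hq]
  exact pow_ne_zero 3 (qPochhammerInf_ne_zero hq)

lemma thetaSeries_eq_thetaSeries_zero_mul_macA (k : ℕ) (hq : ‖q‖ < 1) :
    thetaSeries k q = thetaSeries 0 q * macA k q := by
  rw [thetaSeries_zero hq, thetaSeries_eq_qPochhammerInf_pow_mul_macA k hq]

lemma differentiableAt_macA (k : ℕ) (hq : ‖q‖ < 1) : DifferentiableAt ℂ (macA k) q := by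
  refine ((differentiableAt_thetaSeries k hq).fun_div (differentiableAt_thetaSeries 0 hq)
    (thetaSeries_zero_ne_zero hq)).congr_of_eventuallyEq ?_
  filter_upwards [continuous_norm.continuousAt.eventually_lt_const hq] with w hw
  rw [thetaSeries_eq_thetaSeries_zero_mul_macA k hw,
    mul_div_cancel_left₀ _ (thetaSeries_zero_ne_zero hw)]

lemma deriv_thetaSeries (k : ℕ) (hq : ‖q‖ < 1) :
    deriv (thetaSeries k) q =
      deriv (thetaSeries 0) q * macA k q + thetaSeries 0 q * deriv (macA k) q := by
  have factor : thetaSeries k =ᶠ[𝓝 q] fun w ↦ thetaSeries 0 w * macA k w :=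
    (continuous_norm.continuousAt.eventually_lt_const hq).mono fun _ ↦
      thetaSeries_eq_thetaSeries_zero_mul_macA k
  rw [factor.deriv_eq,
    deriv_fun_mul (differentiableAt_thetaSeries 0 hq) (differentiableAt_macA k hq)]

end ThetaSeries

theorem stmt4 (k : ℕ) (hk : 1 ≤ k) (q : ℂ) (hq : ‖q‖ < 1) :
    macA k q = (1 / ((2 * (k : ℂ) + 1) * (2 * k))) *
      ((6 * macA 1 q + (k : ℂ) * ((k : ℂ) - 1)) * macA (k - 1) q
        - 2 * q * deriv (macA (k - 1)) q) := by
  obtain ⟨k, rfl⟩ := Nat.exists_eq_add_of_le' hk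
  have theta_succ := thetaSeries_succ k hq
  have theta_one := thetaSeries_succ 0 hq
  rw [deriv_thetaSeries k hq, thetaSeries_eq_thetaSeries_zero_mul_macA k hq,
    thetaSeries_eq_thetaSeries_zero_mul_macA (k + 1) hq] at theta_succ
  rw [thetaSeries_eq_thetaSeries_zero_mul_macA (0 + 1) hq, zero_add] at theta_one
  have denom_ne_zero : (2 * ((k + 1 : ℕ) : ℂ) + 1) * (2 * (k + 1 : ℕ)) ≠ 0 := by
    norm_cast
  rw [Nat.add_sub_cancel, one_div, eq_inv_mul_iff_mul_eq₀ denom_ne_zero]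
  apply mul_left_cancel₀ (thetaSeries_zero_ne_zero hq)
  push_cast at theta_one ⊢
  linear_combination theta_succ - macA k q * theta_one
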